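/- arXiv:1504.02598 — 2 statements merged into one kernel-verified Lean document; each statement's English description precedes it below -/
import Mathlib

section
/- Let n and q be integers with n ≥ 2 and q ≥ 2. Then Φ*_n(q) equals the largest divisor m of q^n − 1 such that gcd(m, q^d − 1) = 1 for every divisor d of n with d < n. -/
/-- `Phi n q` is the `n`-th cyclotomic polynomial evaluated at `q`. -/
noncomputable def Phi (n q : ℕ) : ℕ :=
  ((Polynomial.cyclotomic n ℤ).eval (q : ℤ)).toNat

/-- `PhiStar n q` is the largest divisor of `Phi n q` that is coprime to
`∏_{k=1}^{n-1} (q^k - 1)` (an empty product is `1`). -/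
noncomputable def PhiStar (n q : ℕ) : ℕ :=
  sSup {m : ℕ | m ∣ Phi n q ∧ Nat.Coprime m (∏ k ∈ Finset.Ico 1 n, (q ^ k - 1))}

/-!
The two families of competing divisors coincide. In `q ^ n - 1 = ∏ d ∣ n, Φ_d(q)` every factor
with `d < n` divides `q ^ d - 1`, so a number coprime to all these `q ^ d - 1` divides `q ^ n - 1`
exactly when it divides `Φ_n(q)`. For a divisor of `q ^ n - 1`, coprimality to `q ^ k - 1` depends
only on `gcd n k`, because `gcd (q ^ n - 1) (q ^ k - 1) = q ^ gcd n k - 1`; hence exponents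
`1 ≤ k < n` impose nothing beyond the proper divisors of `n`.
-/

section

variable {m n q : ℕ}

theorem natCast_phi (n : ℕ) (hq : 1 ≤ q) :
    (Phi n q : ℤ) = (Polynomial.cyclotomic n ℤ).eval (q : ℤ) :=
  Int.toNat_of_nonneg (Polynomial.cyclotomic_nonneg n (by exact_mod_cast hq))

theorem prod_divisors_phi (hn : 0 < n) (hq : 1 ≤ q) :
    ∏ d ∈ n.divisors, Phi d q = q ^ n - 1 := by
  zify [Nat.one_le_pow n q hq]
  simp only [natCast_phi _ hq, ← Polynomial.eval_prod,
    Polynomial.prod_cyclotomic_eq_X_pow_sub_one hn, Polynomial.eval_sub, Polynomial.eval_pow,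
    Polynomial.eval_X, Polynomial.eval_one]

theorem phi_dvd_pow_sub_one (hn : 0 < n) (hq : 1 ≤ q) : Phi n q ∣ q ^ n - 1 := by
  rw [← prod_divisors_phi hn hq]
  exact Finset.dvd_prod_of_mem (Phi · q) (Nat.mem_divisors_self n hn.ne')

theorem dvd_phi_iff_dvd_pow_sub_one (hn : 0 < n) (hq : 1 ≤ q)
    (hm : ∀ d, d ∣ n → d < n → m.Coprime (q ^ d - 1)) :
    m ∣ Phi n q ↔ m ∣ q ^ n - 1 := by
  have coprime_rest : m.Coprime (∏ d ∈ n.properDivisors, Phi d q) := by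
    refine Nat.Coprime.prod_right fun d hd => ?_
    obtain ⟨hdn, hlt⟩ := Nat.mem_properDivisors.mp hd
    exact (hm d hdn hlt).coprime_dvd_right
      (phi_dvd_pow_sub_one (Nat.pos_of_dvd_of_pos hdn hn) hq)
  rw [← prod_divisors_phi hn hq, ← Nat.cons_self_properDivisors hn.ne', Finset.prod_cons,
    coprime_rest.dvd_mul_right]

theorem coprime_pow_gcd_sub_one_iff (hm : m ∣ q ^ n - 1) (k : ℕ) :
    m.Coprime (q ^ n.gcd k - 1) ↔ m.Coprime (q ^ k - 1) := by
  rw [Nat.Coprime, Nat.Coprime, ← Nat.pow_sub_one_gcd_pow_sub_one, ← Nat.gcd_assoc,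
    Nat.gcd_eq_left hm]

theorem coprime_prod_pow_sub_one_iff (hm : m ∣ q ^ n - 1) :
    m.Coprime (∏ k ∈ Finset.Ico 1 n, (q ^ k - 1)) ↔
      ∀ d, d ∣ n → d < n → m.Coprime (q ^ d - 1) := by
  simp only [Nat.coprime_prod_right_iff, Finset.mem_Ico]
  constructor
  · intro h d hdn hlt
    exact h d ⟨Nat.pos_of_dvd_of_pos hdn (by lia), hlt⟩
  · rintro h k ⟨hk, hkn⟩
    rw [← coprime_pow_gcd_sub_one_iff hm]
    exact h _ (Nat.gcd_dvd_left n k) ((Nat.gcd_le_right n hk).trans_lt hkn)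

theorem dvd_phi_and_coprime_prod_iff (hn : 0 < n) (hq : 1 ≤ q) :
    m ∣ Phi n q ∧ m.Coprime (∏ k ∈ Finset.Ico 1 n, (q ^ k - 1)) ↔
      m ∣ q ^ n - 1 ∧ ∀ d, d ∣ n → d < n → m.Coprime (q ^ d - 1) := by
  constructor
  · rintro ⟨hdvd, hcop⟩
    have hm := hdvd.trans (phi_dvd_pow_sub_one hn hq)
    exact ⟨hm, (coprime_prod_pow_sub_one_iff hm).mp hcop⟩
  · rintro ⟨hm, hcop⟩
    exact ⟨(dvd_phi_iff_dvd_pow_sub_one hn hq hcop).mpr hm,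
      (coprime_prod_pow_sub_one_iff hm).mpr hcop⟩

end

/-- `Φ*_n(q)` is the largest divisor `m` of `q^n − 1` with `gcd(m, q^d − 1) = 1`
for every divisor `d` of `n` with `d < n`. -/
theorem phiStar_isGreatest (n q : ℕ) (hn : 2 ≤ n) (hq : 2 ≤ q) :
    IsGreatest {m : ℕ | m ∣ q ^ n - 1 ∧
        ∀ d : ℕ, d ∣ n → d < n → Nat.Coprime m (q ^ d - 1)}
      (PhiStar n q) := by
  simp only [PhiStar, dvd_phi_and_coprime_prod_iff (show 0 < n by lia) (show 1 ≤ q by lia)]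
  set S := {m : ℕ | m ∣ q ^ n - 1 ∧ ∀ d : ℕ, d ∣ n → d < n → Nat.Coprime m (q ^ d - 1)}
  have one_mem : 1 ∈ S := ⟨one_dvd _, fun d _ _ => Nat.coprime_one_left _⟩
  have pow_sub_one_pos : 0 < q ^ n - 1 :=
    Nat.sub_pos_of_lt (Nat.one_lt_pow (by lia) hq)
  have bddAbove : BddAbove S := ⟨q ^ n - 1, fun m hm => Nat.le_of_dvd pow_sub_one_pos hm.1⟩
  exact ⟨Nat.sSup_mem ⟨1, one_mem⟩ bddAbove, fun m hm => le_csSup bddAbove hm⟩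
end

section
/- For all real constants c > 0 and k > 0, the set of pairs of integers (n, q) with n ≥ 3, q ≥ 2 and Φ*_n(q) ≤ c·n^k is finite. -/
/-!
A prime dividing both `Φ_n(q)` and some `q ^ k - 1` with `0 < k < n` divides `n`, since otherwise
`q` would be a primitive `n`-th root of unity modulo that prime. For `n ≥ 3` a prime divisor of `n`
divides `Φ_n(q)` at most once, so `Φ_n(q) / gcd(Φ_n(q), n)` is coprime to all these `q ^ k - 1`,
and therefore `Φ_n(q) ≤ n Φ*_n(q)`.

In the other direction `q ^ φ(n) ≤ Φ_n(q) ^ 2` for `n ≥ 3` and `q ≥ 2`. The standard bound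
`(q - 1) ^ φ(n) ≤ Φ_n(q)` is vacuous at `q = 2`, but it becomes effective after writing `n = m p`
with `p` prime and expressing `Φ_n(q)` through `Φ_m(q ^ p)`.

So `Φ*_n(q) ≤ c n ^ k` forces `q ^ φ(n) ≤ c ^ 2 n ^ (2 (k + 1))`. As `n ≤ 2 φ(n) ^ 2`, the
right-hand side is at most a polynomial in `φ(n)`, which bounds first `n` and then `q`.
-/

open Polynomial Filter Asymptotics
open scoped Nat

section Totient

theorem le_totient_sq_of_odd {n : ℕ} (hn : Odd n) : n ≤ φ n ^ 2 := by
  induction n using Nat.recOnPosPrimePosCoprime with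
  | zero => simp
  | one => simp
  | prime_pow p a hp ha =>
    have hp2 : 2 < p := hp.odd_iff.1 ((Nat.odd_pow_iff ha.ne').1 hn)
    obtain ⟨b, rfl⟩ := Nat.exists_eq_add_one.2 ha
    obtain ⟨r, rfl⟩ := Nat.exists_eq_add_of_lt hp2
    have hpow : (2 + r + 1) ^ b ≤ ((2 + r + 1) ^ b) ^ 2 :=
      le_self_pow₀ (Nat.one_le_pow _ _ (by lia)) two_ne_zero
    calc (2 + r + 1) ^ (b + 1) = (2 + r + 1) ^ b * (2 + r + 1) := pow_succ _ _
      _ ≤ ((2 + r + 1) ^ b) ^ 2 * (2 + r) ^ 2 := Nat.mul_le_mul hpow (by nlinarith)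
      _ = φ ((2 + r + 1) ^ (b + 1)) ^ 2 := by
        rw [Nat.totient_prime_pow_succ hp, mul_pow, Nat.add_sub_cancel]
  | coprime a b _ _ hab iha ihb =>
    rw [Nat.totient_mul hab, mul_pow]
    rw [Nat.odd_mul] at hn
    exact Nat.mul_le_mul (iha hn.1) (ihb hn.2)

theorem le_two_mul_totient_sq (n : ℕ) : n ≤ 2 * φ n ^ 2 := by
  rcases eq_or_ne n 0 with rfl | hn
  · simp
  obtain ⟨a, m, hm, rfl⟩ := Nat.exists_eq_two_pow_mul_odd hn
  have hpow : 2 ^ a ≤ 2 * φ (2 ^ a) ^ 2 := by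
    rcases a with _ | b
    · simp
    · rw [Nat.totient_prime_pow_succ Nat.prime_two, Nat.add_one_sub_one, mul_one, pow_succ']
      exact Nat.mul_le_mul_left 2 (le_self_pow₀ Nat.one_le_two_pow two_ne_zero)
  calc 2 ^ a * m ≤ 2 * φ (2 ^ a) ^ 2 * φ m ^ 2 :=
        Nat.mul_le_mul hpow (le_totient_sq_of_odd hm)
    _ = 2 * φ (2 ^ a * m) ^ 2 := by
        rw [Nat.totient_mul (Nat.Coprime.pow_left _ (Nat.coprime_two_left.2 hm)), mul_pow,
          mul_assoc]

theorem isBigO_natCast_totient_sq :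
    (fun n : ℕ ↦ (n : ℝ)) =O[atTop] fun n : ℕ ↦ (φ n : ℝ) ^ 2 := by
  refine .of_bound 2 (.of_forall fun n ↦ ?_)
  rw [Real.norm_natCast, Real.norm_of_nonneg (by positivity)]
  exact_mod_cast le_two_mul_totient_sq n

theorem tendsto_totient_atTop : Tendsto φ atTop atTop := by
  refine tendsto_atTop.2 fun b ↦ ?_
  filter_upwards [eventually_gt_atTop (2 * b ^ 2)] with n hn
  by_contra! hb
  have : 2 * φ n ^ 2 ≤ 2 * b ^ 2 := by gcongr
  exact (hn.trans_le (le_two_mul_totient_sq n)).not_ge this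

theorem isLittleO_rpow_two_pow_totient {s : ℝ} (hs : 0 ≤ s) :
    (fun n : ℕ ↦ (n : ℝ) ^ s) =o[atTop] fun n : ℕ ↦ (2 : ℝ) ^ φ n := by
  have hpow : (fun n : ℕ ↦ (n : ℝ) ^ s) =O[atTop] fun n : ℕ ↦ (φ n : ℝ) ^ (2 * s) := by
    refine (isBigO_natCast_totient_sq.rpow hs (.of_forall fun n ↦ by positivity)).congr_right
      fun n ↦ ?_
    exact_mod_cast (Real.rpow_natCast_mul (Nat.cast_nonneg (φ n)) 2 s).symm
  have hexp : (fun x : ℝ ↦ x ^ (2 * s)) =o[atTop] fun x ↦ (2 : ℝ) ^ x := by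
    simpa only [Real.rpow_def_of_pos two_pos] using
      isLittleO_rpow_exp_pos_mul_atTop (2 * s) (Real.log_pos one_lt_two)
  have htotient : Tendsto (fun n : ℕ ↦ (φ n : ℝ)) atTop atTop :=
    tendsto_natCast_atTop_atTop.comp tendsto_totient_atTop
  refine hpow.trans_isLittleO ((hexp.comp_tendsto htotient).congr_right fun n ↦ ?_)
  exact Real.rpow_natCast 2 (φ n)

theorem finite_setOf_two_pow_totient_le (C : ℝ) {s : ℝ} (hs : 0 ≤ s) :
    {n : ℕ | (2 : ℝ) ^ φ n ≤ C * (n : ℝ) ^ s}.Finite := by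
  have hlt : ∀ᶠ n : ℕ in atTop, C * (n : ℝ) ^ s < (2 : ℝ) ^ φ n := by
    filter_upwards [((isLittleO_rpow_two_pow_totient hs).const_mul_left C).def one_half_pos]
      with n hn
    have hpos : (0 : ℝ) < 2 ^ φ n := by positivity
    rw [Real.norm_of_nonneg hpos.le] at hn
    linarith [Real.le_norm_self (C * (n : ℝ) ^ s)]
  rw [← Nat.cofinite_eq_atTop, eventually_cofinite] at hlt
  simpa only [not_lt] using hlt

theorem finite_setOf_pow_totient_le (C : ℝ) {s : ℝ} (hs : 0 < s) :
    {nq : ℕ × ℕ | 2 ≤ nq.2 ∧ (nq.2 : ℝ) ^ φ nq.1 ≤ C * (nq.1 : ℝ) ^ s}.Finite := by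
  refine .of_finite_fibers Prod.fst
    ((finite_setOf_two_pow_totient_le C hs.le).subset ?_) fun n _ ↦ ?_
  · rintro _ ⟨⟨n, q⟩, ⟨hq, h⟩, rfl⟩
    have hq' : (2 : ℝ) ≤ q := by exact_mod_cast hq
    exact (pow_le_pow_left₀ zero_le_two hq' _).trans h
  · refine ((Set.finite_singleton n).prod (Set.finite_Iic ⌊C * (n : ℝ) ^ s⌋₊)).subset ?_
    rintro ⟨n, q⟩ ⟨⟨hq, h⟩, rfl⟩
    dsimp only at hq h
    refine ⟨rfl, Nat.le_floor (le_trans ?_ h)⟩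
    have hn : n ≠ 0 := by
      rintro rfl
      exact absurd h (by simp [hs.ne'])
    exact le_self_pow₀ (by exact_mod_cast (by lia : 1 ≤ q)) (Nat.totient_eq_zero.not.2 hn)

end Totient

section LowerBound

variable {m p : ℕ} {x : ℝ}

theorem pow_totient_le_cyclotomic_eval_sq_of_dvd (hp : p.Prime) (hpm : p ∣ m) (hx : 2 ≤ x) :
    x ^ φ (m * p) ≤ (cyclotomic (m * p) ℝ).eval x ^ 2 := by
  have hxp : 4 ≤ x ^ p := calc
    (4 : ℝ) = 2 ^ 2 := by norm_num
    _ ≤ x ^ 2 := by gcongr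
    _ ≤ x ^ p := pow_le_pow_right₀ (by linarith) hp.two_le
  have hbase : 0 ≤ x ^ p - 1 := by linarith
  calc x ^ φ (m * p) = (x ^ p) ^ φ m := by
        rw [mul_comm, Nat.totient_mul_of_prime_of_dvd hp hpm, pow_mul]
    _ ≤ ((x ^ p - 1) ^ 2) ^ φ m := by gcongr; nlinarith
    _ = ((x ^ p - 1) ^ φ m) ^ 2 := pow_right_comm _ _ _
    _ ≤ (cyclotomic m ℝ).eval (x ^ p) ^ 2 := by
        gcongr
        exact sub_one_pow_totient_le_cyclotomic_eval (by linarith) m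
    _ = (cyclotomic (m * p) ℝ).eval x ^ 2 := by
        rw [← cyclotomic_expand_eq_cyclotomic hp hpm, expand_eval]

theorem pow_sub_one_mul_add_one_sq_le (hp : 2 < p) (hx : 2 ≤ x) :
    x ^ (p - 1) * (x + 1) ^ 2 ≤ (x ^ p - 1) ^ 2 := by
  obtain ⟨r, rfl⟩ := Nat.exists_eq_add_of_lt hp
  have hr : 1 ≤ x ^ r := one_le_pow₀ (by linarith)
  have hroot : x ^ r * (x * (x + 1)) ≤ x ^ (2 + r + 1) - 1 := calc
    x ^ r * (x * (x + 1)) ≤ x ^ r * (x ^ 3 - 1) := by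
      gcongr
      nlinarith [mul_nonneg (sub_nonneg.2 hx) (by positivity : 0 ≤ x ^ 2 + x + 1)]
    _ ≤ x ^ r * x ^ 3 - 1 := by linarith
    _ = x ^ (2 + r + 1) - 1 := by ring
  calc x ^ (2 + r) * (x + 1) ^ 2 = x ^ r * (x * (x + 1)) ^ 2 := by ring
    _ ≤ (x ^ r) ^ 2 * (x * (x + 1)) ^ 2 := by
      gcongr
      exact le_self_pow₀ hr two_ne_zero
    _ = (x ^ r * (x * (x + 1))) ^ 2 := (mul_pow _ _ _).symm
    _ ≤ (x ^ (2 + r + 1) - 1) ^ 2 := by gcongr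

theorem pow_totient_le_cyclotomic_eval_sq_of_not_dvd (hp : p.Prime) (hp2 : 2 < p)
    (hpm : ¬p ∣ m) (hx : 2 ≤ x) :
    x ^ φ (m * p) ≤ (cyclotomic (m * p) ℝ).eval x ^ 2 := by
  have hxp : 1 < x ^ p := one_lt_pow₀ (by linarith) hp.ne_zero
  have hbase : 0 ≤ x ^ p - 1 := by linarith
  have hcyc : 0 ≤ (cyclotomic (m * p) ℝ).eval x := cyclotomic_nonneg _ (by linarith)
  have hexpand : (cyclotomic m ℝ).eval (x ^ p) =
      (cyclotomic (m * p) ℝ).eval x * (cyclotomic m ℝ).eval x := by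
    rw [← eval_mul, ← cyclotomic_expand_eq_cyclotomic_mul hp hpm, expand_eval]
  have hbound : (x ^ p - 1) ^ φ m ≤ (cyclotomic (m * p) ℝ).eval x * (x + 1) ^ φ m := calc
    (x ^ p - 1) ^ φ m ≤ (cyclotomic m ℝ).eval (x ^ p) :=
      sub_one_pow_totient_le_cyclotomic_eval hxp m
    _ = (cyclotomic (m * p) ℝ).eval x * (cyclotomic m ℝ).eval x := hexpand
    _ ≤ (cyclotomic (m * p) ℝ).eval x * (x + 1) ^ φ m := by
      gcongr
      exact cyclotomic_eval_le_add_one_pow_totient (by linarith) m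
  refine le_of_mul_le_mul_right ?_ (by positivity : 0 < ((x + 1) ^ φ m) ^ 2)
  calc x ^ φ (m * p) * ((x + 1) ^ φ m) ^ 2 = (x ^ (p - 1) * (x + 1) ^ 2) ^ φ m := by
        rw [mul_comm m, Nat.totient_mul_of_prime_of_not_dvd hp hpm, pow_mul, mul_pow,
          pow_right_comm (x + 1)]
    _ ≤ ((x ^ p - 1) ^ 2) ^ φ m := by
        gcongr
        exact pow_sub_one_mul_add_one_sq_le hp2 hx
    _ = ((x ^ p - 1) ^ φ m) ^ 2 := pow_right_comm _ _ _
    _ ≤ ((cyclotomic (m * p) ℝ).eval x * (x + 1) ^ φ m) ^ 2 :=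
        pow_le_pow_left₀ (pow_nonneg hbase _) hbound 2
    _ = (cyclotomic (m * p) ℝ).eval x ^ 2 * ((x + 1) ^ φ m) ^ 2 := mul_pow _ _ _

theorem pow_totient_le_cyclotomic_eval_sq {n : ℕ} (hn : 2 < n) (hx : 2 ≤ x) :
    x ^ φ n ≤ (cyclotomic n ℝ).eval x ^ 2 := by
  rcases Nat.four_dvd_or_exists_odd_prime_and_dvd_of_two_lt hn with
    ⟨r, rfl⟩ | ⟨p, hp, ⟨m, rfl⟩, hodd⟩
  · rw [show 4 * r = 2 * r * 2 by ring]
    exact pow_totient_le_cyclotomic_eval_sq_of_dvd Nat.prime_two (dvd_mul_right 2 r) hx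
  · rw [mul_comm]
    by_cases hpm : p ∣ m
    · exact pow_totient_le_cyclotomic_eval_sq_of_dvd hp hpm hx
    · exact pow_totient_le_cyclotomic_eval_sq_of_not_dvd hp (hp.odd_iff.1 hodd) hpm hx

end LowerBound

section Divisibility

variable {R : Type*} [CommRing R]

variable (R) in
theorem cyclotomic_mul_dvd_geom_sum {d t : ℕ} (hd : d ≠ 0) (ht : 1 < t) :
    cyclotomic (d * t) R ∣ ∑ i ∈ Finset.range t, (X ^ d) ^ i := by
  have hmem : d ∈ (d * t).properDivisors :=
    Nat.mem_properDivisors.2 ⟨dvd_mul_right d t, lt_mul_of_one_lt_right (by lia) ht⟩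
  have hdvd := X_pow_sub_one_mul_cyclotomic_dvd_X_pow_sub_one_of_dvd R hmem
  rw [pow_mul, ← mul_geom_sum (X ^ d) t] at hdvd
  have hmonic : (X ^ d - 1 : R[X]).Monic := by simpa using monic_X_pow_sub_C (1 : R) hd
  exact hmonic.isRegular.left.dvd_cancel_left.1 hdvd

theorem cyclotomic_eval_dvd_geom_sum {d t : ℕ} (hd : d ≠ 0) (ht : 1 < t) (a : R) :
    (cyclotomic (d * t) R).eval a ∣ ∑ i ∈ Finset.range t, (a ^ d) ^ i := by
  simpa [eval_finsetSum] using eval_dvd (x := a) (cyclotomic_mul_dvd_geom_sum R hd ht)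

theorem not_sq_dvd_geom_sum_of_dvd_sub_one [IsDomain R] {p : ℕ} (hp : Prime (p : R)) (hodd : Odd p)
    {a : R} (ha : (p : R) ∣ a - 1) : ¬(p : R) ^ 2 ∣ ∑ i ∈ Finset.range p, a ^ i := by
  have hpa : ¬(p : R) ∣ a := fun h ↦ hp.not_dvd_one ((dvd_sub_right h).1 ha)
  have h := emultiplicity_geom_sum₂_eq_one hp hodd ha hpa
  simp only [one_pow, mul_one] at h
  rw [pow_dvd_iff_le_emultiplicity, h]
  norm_num

theorem not_sq_dvd_cyclotomic_eval_of_odd_prime {n p : ℕ} (hn : n ≠ 0) (hp : p.Prime) (hodd : Odd p)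
    (hpn : p ∣ n) (q : ℤ) : ¬(p : ℤ) ^ 2 ∣ (cyclotomic n ℤ).eval q := by
  obtain ⟨m, rfl⟩ := hpn
  rw [mul_comm] at hn ⊢
  intro hdvd
  have hpow : (p : ℤ) ∣ (q ^ m) ^ p - 1 := by
    rw [← pow_mul]
    refine ((dvd_pow_self _ two_ne_zero).trans hdvd).trans ?_
    simpa using eval_dvd (x := q) (cyclotomic.dvd_X_pow_sub_one (m * p) ℤ)
  have hsub : (p : ℤ) ∣ q ^ m - 1 := by
    have := Fact.mk hp
    rw [← ZMod.intCast_zmod_eq_zero_iff_dvd] at hpow ⊢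
    simpa [ZMod.pow_card] using hpow
  exact not_sq_dvd_geom_sum_of_dvd_sub_one (Nat.prime_iff_prime_int.1 hp) hodd hsub
    (hdvd.trans (cyclotomic_eval_dvd_geom_sum (left_ne_zero_of_mul hn) hp.one_lt q))

theorem odd_geom_sum_of_odd {t : ℕ} (ht : Odd t) (a : ℤ) : Odd (∑ i ∈ Finset.range t, a ^ i) := by
  rw [← ZMod.intCast_eq_one_iff_odd]
  push_cast
  generalize (a : ZMod 2) = b
  have hb : b = 0 ∨ b = 1 := by decide +revert
  rcases hb with rfl | rfl
  · rw [zero_geom_sum, if_neg ht.pos.ne']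
  · rw [one_geom_sum, ZMod.natCast_eq_one_iff_odd.2 ht]

theorem not_four_dvd_sq_add_one (a : ℤ) : ¬4 ∣ a ^ 2 + 1 := by
  obtain ⟨b, rfl | rfl⟩ := a.even_or_odd'
  · lia
  · lia

theorem not_four_dvd_cyclotomic_eval {n : ℕ} (hn : 2 < n) (q : ℤ) :
    ¬4 ∣ (cyclotomic n ℤ).eval q := by
  intro h4
  rcases Nat.four_dvd_or_exists_odd_prime_and_dvd_of_two_lt hn with
    ⟨r, rfl⟩ | ⟨p, hp, ⟨m, rfl⟩, hodd⟩
  · have hdvd := cyclotomic_eval_dvd_geom_sum (d := r * 2) (by lia) one_lt_two q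
    rw [geom_sum_two, show r * 2 * 2 = 4 * r by ring, pow_mul] at hdvd
    exact not_four_dvd_sq_add_one (q ^ r) (h4.trans hdvd)
  · have hdvd := cyclotomic_eval_dvd_geom_sum (d := m) (by rintro rfl; simp at hn) hp.one_lt q
    rw [mul_comm m] at hdvd
    have hsum := odd_geom_sum_of_odd hodd (q ^ m)
    have h2 := (show (2 : ℤ) ∣ 4 by norm_num).trans (h4.trans hdvd)
    exact Int.not_even_iff_odd.2 hsum (even_iff_two_dvd.2 h2)

theorem not_sq_dvd_cyclotomic_eval {n p : ℕ} (hn : 2 < n) (hp : p.Prime) (hpn : p ∣ n) (q : ℤ) :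
    ¬(p : ℤ) ^ 2 ∣ (cyclotomic n ℤ).eval q := by
  rcases hp.eq_two_or_odd' with rfl | hodd
  · exact not_four_dvd_cyclotomic_eval hn q
  · exact not_sq_dvd_cyclotomic_eval_of_odd_prime (by lia) hp hodd hpn q

theorem prime_dvd_of_dvd_cyclotomic_eval_of_dvd_pow_sub_one {n k p : ℕ} (hp : p.Prime) (hk : k ≠ 0)
    (hkn : k < n) {q : ℤ} (hcyc : (p : ℤ) ∣ (cyclotomic n ℤ).eval q) (hpow : (p : ℤ) ∣ q ^ k - 1) :
    p ∣ n := by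
  by_contra hpn
  have := Fact.mk hp
  have : NeZero (n : ZMod p) := ⟨by rwa [Ne, ZMod.natCast_eq_zero_iff]⟩
  have hroot : IsPrimitiveRoot (q : ZMod p) n := by
    rw [← isRoot_cyclotomic_iff, IsRoot.def, ← map_cyclotomic_int n (ZMod p), eval_intCast_map]
    exact (ZMod.intCast_zmod_eq_zero_iff_dvd _ p).2 hcyc
  rw [← ZMod.intCast_zmod_eq_zero_iff_dvd] at hpow
  push_cast at hpow
  exact hroot.pow_ne_one_of_pos_of_lt hk hkn (sub_eq_zero.1 hpow)

theorem coprime_div_gcd_of_forall_not_sq_dvd {a n : ℕ}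
    (h : ∀ p, p.Prime → p ∣ n → ¬p ^ 2 ∣ a) : (a / a.gcd n).Coprime n := by
  refine Nat.coprime_of_dvd fun p hp hpd hpn ↦ h p hp hpn ?_
  have hpa : p ∣ a := hpd.trans (Nat.div_dvd_of_dvd (Nat.gcd_dvd_left a n))
  calc p ^ 2 = p * p := sq p
    _ ∣ a.gcd n * (a / a.gcd n) := mul_dvd_mul (Nat.dvd_gcd hpa hpn) hpd
    _ = a := Nat.mul_div_cancel' (Nat.gcd_dvd_left a n)

end Divisibility

section PhiStar

variable {n q : ℕ}

theorem intCast_phi (hq : 1 ≤ q) : (Phi n q : ℤ) = (cyclotomic n ℤ).eval (q : ℤ) :=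
  Int.toNat_of_nonneg (cyclotomic_nonneg n (by exact_mod_cast hq))

theorem realCast_phi (hq : 1 ≤ q) : (Phi n q : ℝ) = (cyclotomic n ℝ).eval (q : ℝ) := by
  rw [← map_cyclotomic_int n ℝ, eval_natCast_map, ← intCast_phi hq]
  simp

theorem phi_pos (hq : 1 < q) : 0 < Phi n q := by
  have h : (0 : ℤ) < Phi n q := by
    rw [intCast_phi hq.le]
    exact cyclotomic_pos' n (by exact_mod_cast hq)
  exact_mod_cast h

theorem le_phiStar_of_coprime (hq : 1 < q) {m : ℕ} (hdvd : m ∣ Phi n q) (hcop : m.Coprime n) :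
    m ≤ PhiStar n q := by
  refine le_csSup ⟨Phi n q, fun d hd ↦ Nat.le_of_dvd (phi_pos hq) hd.1⟩ ⟨hdvd, ?_⟩
  refine Nat.Coprime.prod_right fun k hk ↦ Nat.coprime_of_dvd fun p hp hpm hpk ↦ ?_
  rw [Finset.mem_Ico] at hk
  refine Nat.not_coprime_of_dvd_of_dvd hp.one_lt hpm ?_ hcop
  have hcyc : (p : ℤ) ∣ (cyclotomic n ℤ).eval (q : ℤ) := by
    rw [← intCast_phi hq.le]
    exact_mod_cast hpm.trans hdvd
  have hpow : (p : ℤ) ∣ (q : ℤ) ^ k - 1 := by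
    rw [← Nat.cast_pow, ← Nat.cast_pred (by positivity)]
    exact_mod_cast hpk
  exact prime_dvd_of_dvd_cyclotomic_eval_of_dvd_pow_sub_one hp (by lia) hk.2 hcyc hpow

theorem phi_le_mul_phiStar (hn : 2 < n) (hq : 1 < q) : Phi n q ≤ n * PhiStar n q := by
  have hdvd : (Phi n q).gcd n ∣ Phi n q := Nat.gcd_dvd_left _ _
  have hcop : (Phi n q / (Phi n q).gcd n).Coprime n := by
    refine coprime_div_gcd_of_forall_not_sq_dvd fun p hp hpn hsq ↦ ?_
    refine not_sq_dvd_cyclotomic_eval hn hp hpn q ?_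
    rw [← intCast_phi hq.le]
    exact_mod_cast hsq
  calc Phi n q = (Phi n q).gcd n * (Phi n q / (Phi n q).gcd n) := (Nat.mul_div_cancel' hdvd).symm
    _ ≤ n * PhiStar n q := Nat.mul_le_mul (Nat.gcd_le_right _ (by lia))
        (le_phiStar_of_coprime hq (Nat.div_dvd_of_dvd hdvd) hcop)

theorem pow_totient_le_mul_phiStar_sq (hn : 2 < n) (hq : 2 ≤ q) :
    (q : ℝ) ^ φ n ≤ (n * PhiStar n q : ℝ) ^ 2 := calc
  (q : ℝ) ^ φ n ≤ (cyclotomic n ℝ).eval (q : ℝ) ^ 2 :=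
    pow_totient_le_cyclotomic_eval_sq hn (by exact_mod_cast hq)
  _ = (Phi n q : ℝ) ^ 2 := by rw [realCast_phi (by lia)]
  _ ≤ (n * PhiStar n q : ℝ) ^ 2 := by
    gcongr
    exact_mod_cast phi_le_mul_phiStar hn hq

end PhiStar

/-- For all constants `c, k > 0`, the set of pairs `(n, q)` of integers with
`n ≥ 3`, `q ≥ 2` and `Φ*_n(q) ≤ c·n^k` is finite. -/
theorem finite_phiStar_le (c k : ℝ) (hc : 0 < c) (hk : 0 < k) :
    {nq : ℕ × ℕ | 3 ≤ nq.1 ∧ 2 ≤ nq.2 ∧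
      (PhiStar nq.1 nq.2 : ℝ) ≤ c * (nq.1 : ℝ) ^ k}.Finite := by
  have hs : 0 < 2 * (k + 1) := by positivity
  refine (finite_setOf_pow_totient_le (c ^ 2) hs).subset ?_
  rintro ⟨n, q⟩ ⟨hn, hq, h⟩
  dsimp only at hn hq h
  have hn0 : (0 : ℝ) < n := by exact_mod_cast (by lia : 0 < n)
  refine ⟨hq, ?_⟩
  calc (q : ℝ) ^ φ n ≤ (n * PhiStar n q : ℝ) ^ 2 := pow_totient_le_mul_phiStar_sq hn hq
    _ ≤ (n * (c * (n : ℝ) ^ k)) ^ 2 := by gcongr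
    _ = c ^ 2 * ((n : ℝ) ^ (k + 1)) ^ 2 := by rw [Real.rpow_add_one hn0.ne']; ring
    _ = c ^ 2 * (n : ℝ) ^ (2 * (k + 1)) := by
      rw [← Real.rpow_mul_natCast hn0.le, Nat.cast_ofNat, mul_comm (k + 1)]
end
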